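/- Let n ≥ 2 be an integer and φ ∈ ℝ, set a = cos(2π/n), b = sin(2π/n), and for x ∈ ℂ let R̆(x) be the Yang-Baxterized matrix [[a(x−1)², 0, 0, i·b(x²−1)e^{iφ}], [0, −i·b(x²−1), a(x−1)², 0], [0, a(x−1)², −i·b(x²−1), 0], [i·b(x²−1)e^{−iφ}, 0, 0, a(x−1)²]]. Then for every real x, R̆(x)·R̆(x)† = ρ·I₄, where R̆(x)† is the conjugate transpose, I₄ is the 4×4 identity, and ρ = a²(x−1)⁴ + b²(x²−1)². -/

import Mathlib

/-!
`R̆(x) = a(x-1)² P + i b(x²-1) Q`, where `P` is the SWAP gate and `Q` is a second self-adjoint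
involution, commuting with `P`. For real `x` the first summand is self-adjoint and the second one
is skew-adjoint, so `R̆(x) R̆(x)†` is the difference of their squares.
-/

open Matrix Complex

/-- The Yang-Baxterized matrix R̆(x) of the gate 𝔅ₙ,φ. -/
noncomputable def Rbr (n : ℕ) (φ : ℝ) (x : ℂ) : Matrix (Fin 4) (Fin 4) ℂ :=
  let a : ℂ := (Real.cos (2 * Real.pi / n) : ℂ)
  let b : ℂ := (Real.sin (2 * Real.pi / n) : ℂ)
  !![a * (x - 1) ^ 2, 0, 0, Complex.I * b * (x ^ 2 - 1) * Complex.exp (Complex.I * φ);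
     0, -(Complex.I * b * (x ^ 2 - 1)), a * (x - 1) ^ 2, 0;
     0, a * (x - 1) ^ 2, -(Complex.I * b * (x ^ 2 - 1)), 0;
     Complex.I * b * (x ^ 2 - 1) * Complex.exp (-(Complex.I * φ)), 0, 0, a * (x - 1) ^ 2]

theorem add_mul_star_add_eq_sq_sub_sq {A : Type*} [Ring A] [StarRing A] {h s : A}
    (hh : IsSelfAdjoint h) (hs : s ∈ skewAdjoint A) (hc : Commute h s) :
    (h + s) * star (h + s) = h ^ 2 - s ^ 2 := by
  rw [star_add, hh.star_eq, skewAdjoint.mem_iff.mp hs, ← sub_eq_add_neg, hc.sq_sub_sq]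

theorem smul_add_smul_mul_star_of_sq_eq_one {R A : Type*} [CommRing R] [StarRing R]
    [Ring A] [StarRing A] [Algebra R A] [StarModule R A] {p s : R} {P Q : A}
    (hp : IsSelfAdjoint p) (hs : s ∈ skewAdjoint R)
    (hP : IsSelfAdjoint P) (hQ : IsSelfAdjoint Q) (hP_sq : P ^ 2 = 1) (hQ_sq : Q ^ 2 = 1)
    (hPQ : Commute P Q) :
    (p • P + s • Q) * star (p • P + s • Q) = (p ^ 2 - s ^ 2) • (1 : A) := by
  have hcomm : Commute (p • P) (s • Q) := (hPQ.smul_left p).smul_right s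
  rw [add_mul_star_add_eq_sq_sub_sq (hp.smul hP) (hQ.smul_mem_skewAdjoint hs) hcomm,
    smul_pow, smul_pow, hP_sq, hQ_sq, sub_smul]

section PhaseReflection

variable {R : Type*} [Ring R] [StarRing R]

/-- The second involution in the decomposition of `R̆(x)`, in the basis 00, 01, 10, 11: it is `-1`
on the span of 01 and 10, and exchanges 00 and 11 up to the phases `w` and `star w`. -/
def phaseReflection (w : R) : Matrix (Fin 4) (Fin 4) R :=
  !![0, 0, 0, w;
     0, -1, 0, 0;
     0, 0, -1, 0;
     star w, 0, 0, 0]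

theorem isSelfAdjoint_phaseReflection (w : R) : IsSelfAdjoint (phaseReflection w) := by
  ext i j
  fin_cases i <;> fin_cases j <;> simp [phaseReflection]

theorem phaseReflection_sq {w : R} (hw : w ∈ unitary R) : phaseReflection w ^ 2 = 1 := by
  have hw_star : star w * w = 1 := Unitary.star_mul_self_of_mem hw
  have hw_self : w * star w = 1 := Unitary.mul_star_self_of_mem hw
  ext i j
  fin_cases i <;> fin_cases j <;>
    simp [phaseReflection, sq, mul_apply, Fin.sum_univ_four, hw_star, hw_self]

theorem commute_swap_phaseReflection (w : R) :
    Commute (Matrix.swap R (1 : Fin 4) 2) (phaseReflection w) := by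
  ext i j
  fin_cases i <;> fin_cases j <;>
    simp [phaseReflection, Matrix.swap, PEquiv.toMatrix_toPEquiv_mul,
      PEquiv.mul_toMatrix_toPEquiv, Equiv.swap_apply_def]

end PhaseReflection

theorem smul_swap_add_smul_phaseReflection_mul_conjTranspose {R : Type*} [CommRing R] [StarRing R]
    {p s w : R} (hp : IsSelfAdjoint p) (hs : s ∈ skewAdjoint R) (hw : w ∈ unitary R) :
    (p • Matrix.swap R (1 : Fin 4) 2 + s • phaseReflection w)
        * (p • Matrix.swap R (1 : Fin 4) 2 + s • phaseReflection w)ᴴ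
      = (p ^ 2 - s ^ 2) • (1 : Matrix (Fin 4) (Fin 4) R) := by
  have hswap : IsSelfAdjoint (Matrix.swap R (1 : Fin 4) 2) := conjTranspose_swap 1 2
  have hswap_sq : Matrix.swap R (1 : Fin 4) 2 ^ 2 = 1 := (sq _).trans (swap_mul_self 1 2)
  exact smul_add_smul_mul_star_of_sq_eq_one hp hs hswap (isSelfAdjoint_phaseReflection w)
    hswap_sq (phaseReflection_sq hw) (commute_swap_phaseReflection w)

theorem star_exp_I_mul_ofReal (φ : ℝ) :
    star (Complex.exp (Complex.I * φ)) = Complex.exp (-(Complex.I * φ)) := by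
  rw [Complex.star_def, ← Complex.exp_conj]
  simp

theorem exp_I_mul_ofReal_mem_unitary (φ : ℝ) :
    Complex.exp (Complex.I * φ) ∈ unitary ℂ := by
  rw [Unitary.mem_iff_self_mul_star, star_exp_I_mul_ofReal, ← Complex.exp_add, add_neg_cancel,
    Complex.exp_zero]

theorem Rbr_eq_smul_swap_add_smul_phaseReflection (n : ℕ) (φ : ℝ) (x : ℂ) :
    Rbr n φ x =
      ((Real.cos (2 * Real.pi / n) : ℂ) * (x - 1) ^ 2) • Matrix.swap ℂ (1 : Fin 4) 2
        + (Complex.I * (Real.sin (2 * Real.pi / n) : ℂ) * (x ^ 2 - 1)) •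
          phaseReflection (Complex.exp (Complex.I * φ)) := by
  rw [phaseReflection, star_exp_I_mul_ofReal]
  ext i j
  fin_cases i <;> fin_cases j <;>
    simp [Rbr, Matrix.swap, PEquiv.toMatrix_apply, Equiv.swap_apply_def]

/-- For real x, R̆(x)·R̆(x)† = ρ·I₄ with ρ = a²(x−1)⁴ + b²(x²−1)². -/
theorem Rbr_rho_unitary (n : ℕ) (hn : 2 ≤ n) (φ : ℝ) (x : ℝ) :
    Rbr n φ (x : ℂ) * (Rbr n φ (x : ℂ))ᴴ
      = (((Real.cos (2 * Real.pi / n)) ^ 2 * (x - 1) ^ 4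
          + (Real.sin (2 * Real.pi / n)) ^ 2 * (x ^ 2 - 1) ^ 2 : ℝ) : ℂ)
        • (1 : Matrix (Fin 4) (Fin 4) ℂ) := by
  have hp : IsSelfAdjoint ((Real.cos (2 * Real.pi / n) : ℂ) * ((x : ℂ) - 1) ^ 2) := by
    simp [isSelfAdjoint_iff, -Complex.ofReal_cos]
  have hs : Complex.I * (Real.sin (2 * Real.pi / n) : ℂ) * ((x : ℂ) ^ 2 - 1) ∈ skewAdjoint ℂ := by
    simp [skewAdjoint.mem_iff, -Complex.ofReal_sin]
  rw [Rbr_eq_smul_swap_add_smul_phaseReflection,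
    smul_swap_add_smul_phaseReflection_mul_conjTranspose hp hs (exp_I_mul_ofReal_mem_unitary φ)]
  congr 1
  push_cast
  linear_combination
    -(Complex.sin (2 * Real.pi / n)) ^ 2 * ((x : ℂ) ^ 2 - 1) ^ 2 * Complex.I_sq
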